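/- Let G be a finite connected simple graph with twin classes C_1, …, C_k, and let S be a set of m ≥ 2 vertices with S ⊆ C_i for some i such that the subgraph of G induced by C_i is edgeless (totally disconnected). Then the Steiner distance of S in G equals m. -/

import Mathlib

open SimpleGraph

/-- Two vertices `u` and `v` of a simple graph are *twins* if
`N(u) \ {v} = N(v) \ {u}`, where `N` denotes the open neighborhood. -/
def IsTwin {V : Type*} (G : SimpleGraph V) (u v : V) : Prop :=
  G.neighborSet u \ {v} = G.neighborSet v \ {u}

/-- The *Steiner distance* of a set `S` of vertices of `G`: the minimum number of edges
of a connected subgraph of `G` containing all vertices of `S`. -/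
noncomputable def steinerDist {V : Type*} (G : SimpleGraph V) (S : Set V) : ℕ :=
  sInf {n | ∃ T : G.Subgraph, T.Connected ∧ S ⊆ T.verts ∧ T.edgeSet.ncard = n}

/-! Twins that are not adjacent have the same neighbors, so in a connected graph all vertices of `S`
have a common neighbor `w`, and the star joining `w` to `S` has exactly `|S|` edges. Conversely,
in a connected subgraph containing `S` every vertex of `S` lies on an edge, and these edges are
distinct because no two vertices of `S` are adjacent. -/

section Twins

variable {V : Type*} {G : SimpleGraph V}

theorem IsTwin.refl (v : V) : IsTwin G v v :=
  Eq.refl (G.neighborSet v \ {v})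

theorem IsTwin.neighborSet_eq {u v : V} (h : IsTwin G u v) (huv : ¬ G.Adj u v) :
    G.neighborSet u = G.neighborSet v := by
  have hu : v ∉ G.neighborSet u := huv
  have hv : u ∉ G.neighborSet v := fun hvu ↦ huv hvu.symm
  rwa [IsTwin, Set.sdiff_singleton_eq_self hu, Set.sdiff_singleton_eq_self hv] at h

theorem exists_subset_neighborSet_of_forall_isTwin [Nontrivial V] (hG : G.Preconnected)
    {S : Set V} {v : V} (htwin : ∀ s ∈ S, IsTwin G v s) (hnadj : ∀ s ∈ S, ¬ G.Adj v s) :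
    ∃ w, S ⊆ G.neighborSet w := by
  obtain ⟨w, hvw⟩ := hG.exists_adj_of_nontrivial v
  refine ⟨w, fun s hs ↦ ?_⟩
  have hws : w ∈ G.neighborSet s := (htwin s hs).neighborSet_eq (hnadj s hs) ▸ hvw
  exact hws.symm

end Twins

section Star

variable {V : Type*} {G : SimpleGraph V} {w : V} {S : Set V}

/-- The star with center `w` and leaves `S`, as a subgraph of `G`; it is the connected subgraph
realizing the Steiner distance of `S`. Adjacency is membership of the unordered pair in the set of
edges `s(w, s)` with `s ∈ S`, which makes symmetry and the edge set immediate. -/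
def starSubgraph (hS : S ⊆ G.neighborSet w) : G.Subgraph where
  verts := insert w S
  Adj x y := s(x, y) ∈ (fun s ↦ s(w, s)) '' S
  adj_sub := by
    rintro x y ⟨s, hs, hxy⟩
    rw [← G.mem_edgeSet, ← hxy]
    exact hS hs
  edge_vert := by
    rintro x y ⟨s, hs, hxy⟩
    rcases Sym2.eq_iff.mp hxy with ⟨rfl, -⟩ | ⟨-, rfl⟩
    · exact Set.mem_insert w S
    · exact Set.mem_insert_of_mem w hs
  symm := ⟨fun x y hxy ↦ by rwa [Sym2.eq_swap]⟩

theorem edgeSet_starSubgraph (hS : S ⊆ G.neighborSet w) :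
    (starSubgraph hS).edgeSet = (fun s ↦ s(w, s)) '' S := by
  ext ⟨x, y⟩
  rfl

theorem ncard_edgeSet_starSubgraph (hS : S ⊆ G.neighborSet w) :
    (starSubgraph hS).edgeSet.ncard = S.ncard := by
  rw [edgeSet_starSubgraph]
  exact Set.ncard_image_of_injective S fun _ _ ↦ Sym2.congr_right.mp

theorem connected_starSubgraph (hS : S ⊆ G.neighborSet w) : (starSubgraph hS).Connected := by
  refine ⟨Connected.of_isUniversal (v := ⟨w, Set.mem_insert w S⟩) ?_⟩
  rintro ⟨x, hx⟩ hwx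
  have hxS : x ∈ S := hx.resolve_left fun hxw ↦ hwx (Subtype.ext hxw.symm)
  exact Set.mem_image_of_mem _ hxS

end Star

section SteinerDistance

variable {V : Type*} {G : SimpleGraph V} {S : Set V}

theorem ncard_le_ncard_edgeSet_of_isIndepSet (hfin : G.edgeSet.Finite) (hindep : G.IsIndepSet S)
    (hS : S ⊆ G.support) : S.ncard ≤ G.edgeSet.ncard := by
  have hadj : ∀ s ∈ S, ∃ t, G.Adj s t := hS
  choose! f hf using hadj
  refine Set.ncard_le_ncard_of_injOn (fun s ↦ s(s, f s)) (fun s hs ↦ hf s hs) ?_ hfin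
  intro s hs t ht hst
  by_contra hne
  rcases Sym2.eq_iff.mp hst with ⟨h, -⟩ | ⟨-, h⟩
  · exact hne h
  · exact hindep hs ht hne (h ▸ hf s hs)

theorem subset_support_of_preconnected {T : G.Subgraph} (hT : T.Preconnected)
    (hST : S ⊆ T.verts) (hS : S.Nontrivial) : S ⊆ T.support := by
  intro s hs
  have : Nontrivial T.verts := Set.nontrivial_coe_sort.mpr (hS.mono hST)
  exact hT.exists_adj_of_nontrivial ⟨s, hST hs⟩

theorem ncard_le_ncard_edgeSet_of_preconnected {T : G.Subgraph} (hT : T.Preconnected)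
    (hfin : T.edgeSet.Finite) (hindep : G.IsIndepSet S) (hST : S ⊆ T.verts) (hS : S.Nontrivial) :
    S.ncard ≤ T.edgeSet.ncard := by
  have hindepT : T.spanningCoe.IsIndepSet S := fun s hs t ht hne hst ↦
    hindep hs ht hne (T.adj_sub hst)
  exact ncard_le_ncard_edgeSet_of_isIndepSet hfin hindepT
    (subset_support_of_preconnected hT hST hS)

theorem steinerDist_eq_ncard_edgeSet {T : G.Subgraph} (hT : T.Connected) (hST : S ⊆ T.verts)
    (hmin : ∀ T' : G.Subgraph, T'.Connected → S ⊆ T'.verts → T.edgeSet.ncard ≤ T'.edgeSet.ncard) :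
    steinerDist G S = T.edgeSet.ncard := by
  refine IsLeast.csInf_eq ⟨⟨T, hT, hST, rfl⟩, ?_⟩
  rintro _ ⟨T', hT', hST', rfl⟩
  exact hmin T' hT' hST'

theorem steinerDist_of_subset_edgeless_twinClass_general (hfin : G.edgeSet.Finite)
    (hindep : G.IsIndepSet S) (hS : S.Nontrivial) {w : V} (hw : S ⊆ G.neighborSet w) :
    steinerDist G S = S.ncard := by
  have hmin : ∀ T : G.Subgraph, T.Connected → S ⊆ T.verts →
      (starSubgraph hw).edgeSet.ncard ≤ T.edgeSet.ncard := by
    intro T hT hST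
    rw [ncard_edgeSet_starSubgraph]
    exact ncard_le_ncard_edgeSet_of_preconnected hT.preconnected
      (hfin.subset T.edgeSet_subset) hindep hST hS
  rw [steinerDist_eq_ncard_edgeSet (connected_starSubgraph hw) (Set.subset_insert w S) hmin,
    ncard_edgeSet_starSubgraph]

end SteinerDistance

/-- Let `G` be a finite connected simple graph with twin classes
`C 1, …, C k`, and let `S` be a set of `m ≥ 2` vertices with `S ⊆ C i` for some `i` such
that the subgraph of `G` induced by `C i` is edgeless (totally disconnected).  Then the
Steiner distance of `S` in `G` equals `m`. -/
theorem steinerDist_of_subset_edgeless_twinClass {V : Type*} [Fintype V]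
    (G : SimpleGraph V) (hG : G.Connected)
    (k : ℕ) (C : Fin k → Set V) (c : Fin k → V)
    (hC : ∀ i, C i = {v | IsTwin G (c i) v})
    (hcover : ∀ v : V, ∃ i, v ∈ C i)
    (hdisj : ∀ i j, i ≠ j → Disjoint (C i) (C j))
    (i : Fin k) (hedgeless : ∀ u ∈ C i, ∀ v ∈ C i, ¬ G.Adj u v)
    (S : Finset V) (m : ℕ) (hm : 2 ≤ m) (hcard : S.card = m)
    (hsub : (S : Set V) ⊆ C i) :
    steinerDist G (S : Set V) = m := by
  have hcC : c i ∈ C i := hC i ▸ IsTwin.refl (c i)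
  have htwin : ∀ s ∈ S, IsTwin G (c i) s := fun s hs ↦ (hC i ▸ hsub) hs
  have hS : (S : Set V).Nontrivial := Finset.one_lt_card_iff_nontrivial.mp (by lia)
  have : Nontrivial V := Set.nontrivial_of_nontrivial hS
  obtain ⟨w, hw⟩ := exists_subset_neighborSet_of_forall_isTwin hG.preconnected htwin
    fun s hs ↦ hedgeless (c i) hcC s (hsub hs)
  have hindep : G.IsIndepSet (S : Set V) := fun s hs t ht _ ↦
    hedgeless s (hsub hs) t (hsub ht)
  rw [steinerDist_of_subset_edgeless_twinClass_general G.edgeSet.toFinite hindep hS hw,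
    Set.ncard_coe_finset, hcard]
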